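/- gl(1|2) representations yield representations of the graded Yang–Baxter algebra: let p : {1,2,3} → ℤ₂ be one of the three gradings (+,−,−), (−,+,−), (−,−,+), let V be a complex vector space, and let E^α_β ∈ End(V) (α,β ∈ {1,2,3}) satisfy the gl(1|2) relations E^α_β E^γ_δ − (−1)^{(p(α)+p(β))(p(γ)+p(δ))} E^γ_δ E^α_β = δ^α_δ E^γ_β − (−1)^{(p(α)+p(β))(p(γ)+p(δ))} δ^γ_β E^α_δ for all indices. Then the L-matrix L(λ) with entries L^α_β(λ) = a(λ) δ^α_β + b(λ)(−1)^{p(α)p(β)} E^α_β is a representation of the graded Yang–Baxter algebra with grading p: ř_p(λ−μ)(L(λ) ⊗_p L(μ)) = (L(μ) ⊗_p L(λ)) ř_p(λ−μ) for all λ, μ with λ + ic ≠ 0, μ + ic ≠ 0, λ − μ + ic ≠ 0. -/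

import Mathlib

open scoped BigOperators

noncomputable section

namespace Gl12

/-- The sign `(−1)^x` for `x ∈ ℤ₂`. -/
def eps (x : ZMod 2) : ℂ := if x = 0 then 1 else -1

/-- `a(λ) = λ/(λ + ic)`. -/
def af (c l : ℂ) : ℂ := l / (l + Complex.I * c)

/-- `b(λ) = ic/(λ + ic)`. -/
def bf (c l : ℂ) : ℂ := Complex.I * c / (l + Complex.I * c)

/-- The R-matrix `R_p(λ)^{αγ}_{βδ} = a(λ)(−1)^{p(α)p(γ)} δ^α_β δ^γ_δ + b(λ) δ^α_δ δ^γ_β`;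
rows are indexed by `(α, γ)` and columns by `(β, δ)`. -/
def Rmat {ι : Type*} [DecidableEq ι] (c : ℂ) (p : ι → ZMod 2) (l : ℂ) :
    Matrix (ι × ι) (ι × ι) ℂ := fun x y =>
  af c l * eps (p x.1 * p x.2) * (if x.1 = y.1 then 1 else 0) * (if x.2 = y.2 then 1 else 0)
    + bf c l * (if x.1 = y.2 then 1 else 0) * (if x.2 = y.1 then 1 else 0)

/-- `ř_p(λ)^{αγ}_{βδ} = R_p(λ)^{γα}_{βδ}`. -/
def Rcheck {ι : Type*} [DecidableEq ι] (c : ℂ) (p : ι → ZMod 2) (l : ℂ) :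
    Matrix (ι × ι) (ι × ι) ℂ := fun x y => Rmat c p l (x.2, x.1) y

/-- Super tensor product of (possibly rectangular) matrices with entries in an algebra:
`(A ⊗_p B)^{αγ}_{βδ} = (−1)^{(p(α)+p(β))p(γ)} A^α_β B^γ_δ`, where `p1` is the parity of the
row indices of `A`, `q1` the parity of the column indices of `A`, and `p2` the parity of the
row indices of `B`. -/
def stp {A : Type*} [NonUnitalNonAssocSemiring A] [Module ℂ A]
    {ι₁ ι₂ κ₁ κ₂ : Type*} (p1 : ι₁ → ZMod 2) (q1 : ι₂ → ZMod 2) (p2 : κ₁ → ZMod 2)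
    (M : Matrix ι₁ ι₂ A) (N : Matrix κ₁ κ₂ A) : Matrix (ι₁ × κ₁) (ι₂ × κ₂) A :=
  fun x y => eps ((p1 x.1 + q1 y.1) * p2 x.2) • (M x.1 y.1 * N x.2 y.2)

/-- Product of a scalar matrix with a matrix with entries in a module. -/
def cmulE {A : Type*} [AddCommMonoid A] [Module ℂ A] {ι κ μ : Type*} [Fintype κ]
    (M : Matrix ι κ ℂ) (X : Matrix κ μ A) : Matrix ι μ A :=
  fun i m => ∑ k, M i k • X k m

/-- Product of a matrix with entries in a module with a scalar matrix. -/
def emulC {A : Type*} [AddCommMonoid A] [Module ℂ A] {ι κ μ : Type*} [Fintype κ]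
    (X : Matrix ι κ A) (M : Matrix κ μ ℂ) : Matrix ι μ A :=
  fun i m => ∑ k, M k m • X i k

/-- The grading `(+,−,−)`: `p(1)=0, p(2)=p(3)=1`. -/
def gpmm : Fin 3 → ZMod 2 := ![0, 1, 1]

/-- The grading `(−,+,−)`: `p(2)=0, p(1)=p(3)=1`. -/
def gmpm : Fin 3 → ZMod 2 := ![1, 0, 1]

/-- The grading `(−,−,+)`: `p(3)=0, p(1)=p(2)=1`. -/
def gmmp : Fin 3 → ZMod 2 := ![1, 1, 0]

/-- The induced grading `g' = (+,−)`: `p'(1)=0, p'(2)=1`. -/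
def ppar : Fin 2 → ZMod 2 := ![0, 1]

/-- Trivial parity on a one-element index set (the row index of the row vector `B`). -/
def punit : Fin 1 → ZMod 2 := fun _ => 0

/-- A representation of the graded Yang–Baxter algebra with grading `p` on `H`:
`ř_p(λ−μ) (T(λ) ⊗_p T(μ)) = (T(μ) ⊗_p T(λ)) ř_p(λ−μ)` for all `λ, μ` in the domain `D`
(whenever `ř_p(λ−μ)` is defined, i.e. `λ − μ + ic ≠ 0`). -/
def IsRep {H : Type*} [AddCommGroup H] [Module ℂ H] (c : ℂ) (p : Fin 3 → ZMod 2) (D : Set ℂ)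
    (T : ℂ → Matrix (Fin 3) (Fin 3) (Module.End ℂ H)) : Prop :=
  ∀ l ∈ D, ∀ m ∈ D, l - m + Complex.I * c ≠ 0 →
    cmulE (Rcheck c p (l - m)) (stp p p p (T l) (T m)) =
      emulC (stp p p p (T m) (T l)) (Rcheck c p (l - m))

end Gl12

namespace Gl12

/-- The L-matrix `L^α_β(λ) = a(λ) δ^α_β + b(λ)(−1)^{p(α)p(β)} E^α_β` built from a
gl(1|2) representation `E`. -/
def LfromE (c : ℂ) {V : Type*} [AddCommGroup V] [Module ℂ V] (p : Fin 3 → ZMod 2)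
    (E : Matrix (Fin 3) (Fin 3) (Module.End ℂ V)) (l : ℂ) :
    Matrix (Fin 3) (Fin 3) (Module.End ℂ V) := fun α β =>
  af c l • (if α = β then (1 : Module.End ℂ V) else 0)
    + (bf c l * eps (p α * p β)) • E α β

/-!
Write `Ê^α_β = (−1)^{p(α)p(β)} E^α_β`, let `P` be the graded permutation, and put `X₁ = Ê ⊗_p 1`,
`X₂ = 1 ⊗_p Ê`. Then `ř_p(ν) = a(ν) P + b(ν)` and `L(λ) = a(λ) + b(λ) Ê`. Whatever `E` is,
`P X₁ = X₂ P` and `P X₂ = X₁ P`, whereas the gl relations for `E` say precisely that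
`P (Ê ⊗_p Ê) − (Ê ⊗_p Ê) P = X₁ − X₂`. Hence both sides of the Yang–Baxter relation differ by a
multiple of `X₁ − X₂`, and its coefficient vanishes because
`a(λ−μ) b(λ) b(μ) = b(λ−μ) (a(λ) b(μ) − b(λ) a(μ))`.
-/

lemma eps_zero : eps 0 = 1 := if_pos rfl

lemma eps_add (x y : ZMod 2) : eps (x + y) = eps x * eps y := by
  have zero_or_one : ∀ z : ZMod 2, z = 0 ∨ z = 1 := by decide
  obtain rfl | rfl := zero_or_one x <;> obtain rfl | rfl := zero_or_one y <;>
    simp [eps, CharTwo.add_self_eq_zero]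

section SuperTensor

variable {A : Type*} [NonUnitalNonAssocSemiring A] [Module ℂ A] {ι₁ ι₂ κ₁ κ₂ : Type*}
  (p₁ : ι₁ → ZMod 2) (q₁ : ι₂ → ZMod 2) (p₂ : κ₁ → ZMod 2)

lemma stp_add_left (M M' : Matrix ι₁ ι₂ A) (N : Matrix κ₁ κ₂ A) :
    stp p₁ q₁ p₂ (M + M') N = stp p₁ q₁ p₂ M N + stp p₁ q₁ p₂ M' N := by
  ext x y
  simp only [stp, Matrix.add_apply, add_mul, smul_add]

lemma stp_add_right (M : Matrix ι₁ ι₂ A) (N N' : Matrix κ₁ κ₂ A) :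
    stp p₁ q₁ p₂ M (N + N') = stp p₁ q₁ p₂ M N + stp p₁ q₁ p₂ M N' := by
  ext x y
  simp only [stp, Matrix.add_apply, mul_add, smul_add]

lemma stp_smul_left [IsScalarTower ℂ A A] (z : ℂ) (M : Matrix ι₁ ι₂ A) (N : Matrix κ₁ κ₂ A) :
    stp p₁ q₁ p₂ (z • M) N = z • stp p₁ q₁ p₂ M N := by
  ext x y
  simp only [stp, Matrix.smul_apply, smul_mul_assoc, smul_comm z]

lemma stp_smul_right [SMulCommClass ℂ A A] (z : ℂ) (M : Matrix ι₁ ι₂ A) (N : Matrix κ₁ κ₂ A) :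
    stp p₁ q₁ p₂ M (z • N) = z • stp p₁ q₁ p₂ M N := by
  ext x y
  simp only [stp, Matrix.smul_apply, mul_smul_comm, smul_comm z]

end SuperTensor

lemma stp_one_one {A : Type*} [NonAssocSemiring A] [Module ℂ A] {ι κ : Type*} [DecidableEq ι]
    [DecidableEq κ] (p : ι → ZMod 2) (q : κ → ZMod 2) :
    stp p p q (1 : Matrix ι ι A) (1 : Matrix κ κ A) = 1 := by
  ext ⟨α, γ⟩ ⟨β, δ⟩
  by_cases hαβ : α = β
  · subst hαβ
    simp [stp, Matrix.one_apply, CharTwo.add_self_eq_zero, eps_zero]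
  · simp [stp, Matrix.one_apply, hαβ]

section ScalarProduct

variable {A : Type*} [Semiring A] [Algebra ℂ A] {ι κ μ : Type*} [Fintype κ]

lemma cmulE_eq_map_mul (M : Matrix ι κ ℂ) (X : Matrix κ μ A) :
    cmulE M X = M.map (algebraMap ℂ A) * X := by
  ext i j
  simp only [cmulE, Matrix.mul_apply, Matrix.map_apply, Algebra.smul_def]

lemma emulC_eq_mul_map (X : Matrix ι κ A) (M : Matrix κ μ ℂ) :
    emulC X M = X * M.map (algebraMap ℂ A) := by
  ext i j
  simp only [emulC, Matrix.mul_apply, Matrix.map_apply, Algebra.smul_def, Algebra.commutes]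

end ScalarProduct

section GradedSwap

variable {A : Type*} [Semiring A] [Algebra ℂ A] {ι : Type*} [DecidableEq ι]

variable (A) in
/-- The graded permutation matrix `P^{αγ}_{βδ} = (−1)^{p(α)p(γ)} δ^α_δ δ^γ_β`, with scalar entries
viewed in the algebra `A` so that it multiplies matrices over `A`. -/
def gradedSwap (p : ι → ZMod 2) : Matrix (ι × ι) (ι × ι) A := fun x y =>
  if x.swap = y then algebraMap ℂ A (eps (p x.1 * p x.2)) else 0

lemma Rcheck_map_algebraMap (c : ℂ) (p : ι → ZMod 2) (l : ℂ) :
    (Rcheck c p l).map (algebraMap ℂ A) = af c l • gradedSwap A p + bf c l • 1 := by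
  ext ⟨α, γ⟩ ⟨β, δ⟩
  simp only [Matrix.map_apply, Matrix.add_apply, Matrix.smul_apply, Matrix.one_apply, Rcheck, Rmat,
    gradedSwap, Prod.swap_prod_mk, Prod.mk.injEq, mul_comm (p γ)]
  split_ifs <;> simp_all [Algebra.smul_def]

variable [Fintype ι]

lemma gradedSwap_mul_apply (p : ι → ZMod 2) {κ : Type*} (X : Matrix (ι × ι) κ A) (x : ι × ι)
    (k : κ) : (gradedSwap A p * X) x k = eps (p x.1 * p x.2) • X x.swap k := by
  simp [Matrix.mul_apply, gradedSwap, Algebra.smul_def]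

lemma mul_gradedSwap_apply (p : ι → ZMod 2) {κ : Type*} (X : Matrix κ (ι × ι) A) (k : κ)
    (y : ι × ι) : (X * gradedSwap A p) k y = eps (p y.1 * p y.2) • X k y.swap := by
  simp [Matrix.mul_apply, gradedSwap, Prod.swap_eq_iff_eq_swap, Algebra.smul_def, Algebra.commutes,
    mul_comm (p y.1)]

lemma gradedSwap_mul_stp_one_right (p : ι → ZMod 2) (X : Matrix ι ι A) :
    gradedSwap A p * stp p p p X 1 = stp p p p 1 X * gradedSwap A p := by
  ext ⟨α, γ⟩ ⟨β, δ⟩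
  rw [gradedSwap_mul_apply, mul_gradedSwap_apply, Prod.swap_prod_mk, Prod.swap_prod_mk]
  by_cases hαδ : α = δ
  · subst hαδ
    have hsign : p α * p γ + (p γ + p β) * p α = p β * p α + (p α + p α) * p γ := by grind
    simp only [stp, smul_smul, ← eps_add, hsign, Matrix.one_apply_eq, mul_one, one_mul]
  · simp [stp, hαδ]

lemma gradedSwap_mul_stp_one_left (p : ι → ZMod 2) (X : Matrix ι ι A) :
    gradedSwap A p * stp p p p 1 X = stp p p p X 1 * gradedSwap A p := by
  ext ⟨α, γ⟩ ⟨β, δ⟩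
  rw [gradedSwap_mul_apply, mul_gradedSwap_apply, Prod.swap_prod_mk, Prod.swap_prod_mk]
  by_cases hγβ : γ = β
  · subst hγβ
    have hsign : p α * p γ + (p γ + p γ) * p α = p γ * p δ + (p α + p δ) * p γ := by grind
    simp only [stp, smul_smul, ← eps_add, hsign, Matrix.one_apply_eq, mul_one, one_mul]
  · simp [stp, hγβ]

end GradedSwap

section LMatrix

variable {A : Type*} [Semiring A] [Algebra ℂ A] {ι : Type*}

/-- The matrix `Ê` with entries `(−1)^{p(α)p(β)} E^α_β`, the coefficient of `b(λ)` in the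
L-matrix. -/
def signTwist (p : ι → ZMod 2) (E : Matrix ι ι A) : Matrix ι ι A :=
  fun α β => eps (p α * p β) • E α β

lemma stp_signTwist_apply (p : ι → ZMod 2) (E : Matrix ι ι A) (α β γ δ : ι) :
    stp p p p (signTwist p E) (signTwist p E) (α, γ) (β, δ)
      = eps ((p α + p β) * p γ + p α * p β + p γ * p δ) • (E α β * E γ δ) := by
  simp only [stp, signTwist, smul_mul_assoc, mul_smul_comm, smul_smul, eps_add, mul_assoc,
    mul_comm (eps (p γ * p δ))]

variable [DecidableEq ι]

/-- The L-matrix `L(λ) = a(λ) + b(λ) Ê` over an arbitrary graded index set and algebra; for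
three indices and operators on a vector space it is `LfromE`. -/
def superLMatrix (c : ℂ) (p : ι → ZMod 2) (E : Matrix ι ι A) (l : ℂ) : Matrix ι ι A :=
  af c l • 1 + bf c l • signTwist p E

lemma superLMatrix_eq_LfromE {V : Type*} [AddCommGroup V] [Module ℂ V] (c : ℂ)
    (p : Fin 3 → ZMod 2) (E : Matrix (Fin 3) (Fin 3) (Module.End ℂ V)) (l : ℂ) :
    superLMatrix c p E l = LfromE c p E l := by
  ext1 α β
  simp only [superLMatrix, LfromE, signTwist, Matrix.add_apply, Matrix.smul_apply,
    Matrix.one_apply, smul_smul]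

lemma stp_superLMatrix (c : ℂ) (p : ι → ZMod 2) (E : Matrix ι ι A) (l m : ℂ) :
    stp p p p (superLMatrix c p E l) (superLMatrix c p E m)
      = (af c l * af c m) • 1 + (bf c l * af c m) • stp p p p (signTwist p E) 1
        + (af c l * bf c m) • stp p p p 1 (signTwist p E)
        + (bf c l * bf c m) • stp p p p (signTwist p E) (signTwist p E) := by
  simp only [superLMatrix, stp_add_left, stp_add_right, stp_smul_left, stp_smul_right, stp_one_one]
  module

end LMatrix

lemma af_sub_mul_bf_mul_bf (c l m : ℂ) :
    af c (l - m) * (bf c l * bf c m) = bf c (l - m) * (af c l * bf c m - bf c l * af c m) := by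
  simp only [af, bf]
  ring

section GLSuperRep

variable {A : Type*} [Ring A] [Algebra ℂ A] {ι : Type*} [DecidableEq ι]

/-- The entries of `E` satisfy the superbracket relations of the general linear Lie superalgebra
with index set `ι` graded by `p`; `gl(m|n)` is the case of `m` even and `n` odd indices. -/
def IsGLSuperRep (p : ι → ZMod 2) (E : Matrix ι ι A) : Prop :=
  ∀ α β γ δ : ι,
    E α β * E γ δ - eps ((p α + p β) * (p γ + p δ)) • (E γ δ * E α β)
      = (if α = δ then E γ β else 0)
        - eps ((p α + p β) * (p γ + p δ)) • (if γ = β then E α δ else 0)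

lemma IsGLSuperRep.gradedSwap_commutator [Fintype ι] {p : ι → ZMod 2} {E : Matrix ι ι A}
    (hE : IsGLSuperRep p E) :
    gradedSwap A p * stp p p p (signTwist p E) (signTwist p E)
        - stp p p p (signTwist p E) (signTwist p E) * gradedSwap A p
      = stp p p p (signTwist p E) 1 - stp p p p 1 (signTwist p E) := by
  ext ⟨α, γ⟩ ⟨β, δ⟩
  -- `eps σ` times the relation for `E γ β` and `E α δ` is the asserted identity, term by term.
  let σ : ZMod 2 := p α * p β + p γ * p β + p α * p δ
  let τ : ZMod 2 := (p γ + p β) * (p α + p δ)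
  have hswap_mul : (gradedSwap A p * stp p p p (signTwist p E) (signTwist p E)) (α, γ) (β, δ)
      = eps σ • (E γ β * E α δ) := by
    have hsign : p α * p γ + ((p γ + p β) * p α + p γ * p β + p α * p δ) = σ := by grind
    rw [gradedSwap_mul_apply, Prod.swap_prod_mk, stp_signTwist_apply, smul_smul, ← eps_add, hsign]
  have hmul_swap : (stp p p p (signTwist p E) (signTwist p E) * gradedSwap A p) (α, γ) (β, δ)
      = eps σ • eps τ • (E α δ * E γ β) := by
    have hsign : p β * p δ + ((p α + p δ) * p γ + p α * p δ + p γ * p β) = σ + τ := by grind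
    rw [mul_gradedSwap_apply, Prod.swap_prod_mk, stp_signTwist_apply, smul_smul, smul_smul,
      ← eps_add, ← eps_add, hsign]
  have hleft : stp p p p (signTwist p E) 1 (α, γ) (β, δ)
      = eps σ • (if γ = δ then E α β else 0) := by
    split_ifs with hγδ
    · subst hγδ
      have hsign : (p α + p β) * p γ + p α * p β = σ := by grind
      simp only [stp, signTwist, Matrix.one_apply_eq, mul_one, smul_smul, ← eps_add, hsign]
    · simp [stp, hγδ]
  have hright : stp p p p 1 (signTwist p E) (α, γ) (β, δ)
      = eps σ • eps τ • (if α = β then E γ δ else 0) := by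
    split_ifs with hαβ
    · subst hαβ
      have hsign : (p α + p α) * p γ + p γ * p δ = σ + τ := by grind
      simp only [stp, signTwist, Matrix.one_apply_eq, one_mul, smul_smul, ← eps_add, hsign]
    · simp [stp, hαβ]
  rw [Matrix.sub_apply, Matrix.sub_apply, hswap_mul, hmul_swap, hleft, hright, ← smul_sub,
    ← smul_sub, hE γ β α δ]

end GLSuperRep

theorem gl12_rep_yields_yba_rep_general {A : Type*} [Ring A] [Algebra ℂ A] {ι : Type*}
    [Fintype ι] [DecidableEq ι] (c : ℂ) (p : ι → ZMod 2) (E : Matrix ι ι A)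
    (hE : IsGLSuperRep p E) :
    ∀ l m : ℂ, l + Complex.I * c ≠ 0 → m + Complex.I * c ≠ 0 → l - m + Complex.I * c ≠ 0 →
      cmulE (Rcheck c p (l - m)) (stp p p p (superLMatrix c p E l) (superLMatrix c p E m))
        = emulC (stp p p p (superLMatrix c p E m) (superLMatrix c p E l))
            (Rcheck c p (l - m)) := by
  intro l m _ _ _
  have hcomm := sub_eq_iff_eq_add.mp hE.gradedSwap_commutator
  have hcoeff := af_sub_mul_bf_mul_bf c l m
  rw [cmulE_eq_map_mul, emulC_eq_mul_map, Rcheck_map_algebraMap]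
  simp only [stp_superLMatrix, add_mul, mul_add, smul_mul_assoc, mul_smul_comm, one_mul, mul_one,
    gradedSwap_mul_stp_one_left, gradedSwap_mul_stp_one_right, hcomm]
  linear_combination (norm := module)
    hcoeff • (stp p p p (signTwist p E) 1 - stp p p p 1 (signTwist p E))

/-- gl(1|2) representations yield representations of the graded
Yang–Baxter algebra: if `p` is one of the three gradings `(+,−,−)`, `(−,+,−)`, `(−,−,+)`
and the operators `E^α_β` satisfy the gl(1|2) superbracket relations compatible with `p`,
then `ř_p(λ−μ)(L(λ) ⊗_p L(μ)) = (L(μ) ⊗_p L(λ)) ř_p(λ−μ)`. -/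
theorem gl12_rep_yields_yba_rep (c : ℂ) (hc : c ≠ 0) {V : Type*} [AddCommGroup V]
    [Module ℂ V] (p : Fin 3 → ZMod 2) (hp : p = gpmm ∨ p = gmpm ∨ p = gmmp)
    (E : Matrix (Fin 3) (Fin 3) (Module.End ℂ V))
    (hE : ∀ α β γ δ : Fin 3,
      E α β * E γ δ - eps ((p α + p β) * (p γ + p δ)) • (E γ δ * E α β)
        = (if α = δ then E γ β else 0)
          - eps ((p α + p β) * (p γ + p δ)) • (if γ = β then E α δ else 0)) :
    ∀ l m : ℂ, l + Complex.I * c ≠ 0 → m + Complex.I * c ≠ 0 →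
      l - m + Complex.I * c ≠ 0 →
      cmulE (Rcheck c p (l - m)) (stp p p p (LfromE c p E l) (LfromE c p E m))
        = emulC (stp p p p (LfromE c p E m) (LfromE c p E l)) (Rcheck c p (l - m)) := by
  simpa only [superLMatrix_eq_LfromE] using gl12_rep_yields_yba_rep_general c p E hE

end Gl12
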